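/- arXiv:2107.04325 — 2 statements merged into one kernel-verified Lean document; each statement's English description precedes it below -/
import Mathlib

section
/- Let θ be a flow for (A,F). Then for every M > N + 1 there exists a constant C = C(M, T) > 0 such that for all 0 ≤ t < s ≤ T and all x, w ∈ ℝ^N: ∫_{ℝ^N} (det 𝕋_{s−t})^{-1} ( 1 + |𝕋_{s−t}^{-1}( x − θ_{t,s}(y) ) − w| )^{−M} dy ≤ C, where θ_{t,s}(y) is the backward flow with terminal value y at time s. -/
/-!
The flow is only a measurable selection of Peano solutions, with no semigroup or inverse property,
so there is no Jacobian to compute. What survives is an approximate inversion at the intrinsic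
scale (`flow_compare`): for `h = s - t`,
`1 + |𝕋_h⁻¹ (θ_{s,t}(x) - y)| ≤ C (1 + |𝕋_h⁻¹ (x - θ_{t,s}(y))|)` with `C` independent of `h`.

To see this, let `Z_u = 𝕋_h⁻¹ (θ_{u,t}(x) - θ_{u,s}(y))` on `[t, s]`: its values at the two ends are
the two quantities being compared. The lower bounds on the Hölder exponents `β^j` and the
subdiagonal structure of `A` say precisely that a block-`j` increment of intrinsic size moves the
`i`-th component of the drift by at most `O(h^{-1})` times the size of block `i` (`hexp_scale`).
With `r^β ≤ 1 + r` this gives `|Ż_u| ≤ (C/h) (1 + |Z_u|)` (`drift_scaled`), and Gronwall's inequality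
over an interval of length `h` costs only the factor `e^C`.

The vector `w` is absorbed into the starting point by replacing `x` with `x' = x - 𝕋_h w`. After
applying the comparison, the integrand depends on `y` only through `𝕋_h⁻¹ (θ_{s,t}(x') - y)`, and
the linear change of variables `integral_scaled` turns the integral into
`C^M ∫ (1 + |z|)^{-M} dz`, finite since `M > N`.

The equation defining a flow uses the Bochner integral, which is zero for a non-integrable
velocity; `integrable_traj_fwd` and `integrable_traj_bwd` show that the velocity along a
trajectory is always integrable.
-/

open MeasureTheory Real Set

noncomputable section

/-- The product state space `ℝ^N = ℝ^{d 0} × ⋯ × ℝ^{d (n-1)}`,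
the `i`-th block having dimension `d i`. -/
abbrev E (n : ℕ) (d : Fin n → ℕ) : Type := ∀ i : Fin n, Fin (d i) → ℝ

/-- The action of the inverse intrinsic scale matrix `𝕋_h⁻¹ = h^{-1/α} 𝕄_h⁻¹`:
it rescales the `i`-th block (0-indexed) by `h^{-(1/α + i)}`. -/
def Tinv {n : ℕ} {d : Fin n → ℕ} (α h : ℝ) (x : E n d) : E n d :=
  fun i => (h ^ ((1 : ℝ) / α + ((i : ℕ) : ℝ)))⁻¹ • x i

/-- `det 𝕋_h = h^{∑ i d_i (1/α + i)}` (0-indexed blocks). -/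
def detT (n : ℕ) (d : Fin n → ℕ) (α h : ℝ) : ℝ :=
  h ^ (∑ i : Fin n, (d i : ℝ) * ((1 : ℝ) / α + ((i : ℕ) : ℝ)))

/-- A measurable Cauchy–Peano flow for `ẏ_u = A_u y_u + F(u, y_u)` on `[0,T]`:
`θ_{t,s}(z) = z - ∫_t^s (A_u θ_{u,s}(z) + F(u, θ_{u,s}(z))) du` (signed integral).
For `t ≤ s`, `θ_{t,s}(y)` is the backward flow with terminal value `y` at time `s`,
and `θ_{s,t}(x)` is the forward flow started from `x` at time `t`. -/
def IsFlow {n : ℕ} {d : Fin n → ℕ} (T : ℝ) (A : ℝ → E n d →L[ℝ] E n d)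
    (F : ℝ → E n d → E n d) (θ : ℝ → ℝ → E n d → E n d) : Prop :=
  Measurable (fun p : ℝ × ℝ × E n d => θ p.1 p.2.1 p.2.2) ∧
  ∀ t s : ℝ, t ∈ Icc (0 : ℝ) T → s ∈ Icc (0 : ℝ) T → ∀ z : E n d,
    θ t s z = z - ∫ u in t..s, (A u (θ u s z) + F u (θ u s z))

/-- The time-ordered resolvent of `A`, in applied form:
`R_{s,t} x = x + ∫_t^s A_u (R_{u,t} x) du`, i.e. `∂_s R_{s,t} = A_s R_{s,t}`, `R_{t,t} = Id`. -/
def IsResolvent {n : ℕ} {d : Fin n → ℕ} (T : ℝ) (A : ℝ → E n d →L[ℝ] E n d)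
    (R : ℝ → ℝ → E n d →L[ℝ] E n d) : Prop :=
  ∀ s t : ℝ, s ∈ Icc (0 : ℝ) T → t ∈ Icc (0 : ℝ) T → ∀ x : E n d,
    R s t x = x + ∫ u in t..s, A u (R u t x)

/-- The frozen shift `m̃^{τ,ξ}_{s,t}(x) = R_{s,t} x + ∫_t^s R_{s,u} F(u, θ_{u,τ}(ξ)) du`. -/
def shiftm {n : ℕ} {d : Fin n → ℕ} (F : ℝ → E n d → E n d)
    (θ : ℝ → ℝ → E n d → E n d) (R : ℝ → ℝ → E n d →L[ℝ] E n d)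
    (τ : ℝ) (ξ : E n d) (s t : ℝ) (x : E n d) : E n d :=
  R s t x + ∫ u in t..s, R s u (F u (θ u τ ξ))

/-- Family of smooth compactly supported probability-density mollifiers. -/
def IsMollifier {n : ℕ} {d : Fin n → ℕ} (ρ : Fin n → E n d → ℝ) : Prop :=
  ∀ i, ContDiff ℝ (⊤ : ℕ∞) (ρ i) ∧ HasCompactSupport (ρ i) ∧ (∀ ω, 0 ≤ ρ i ω) ∧
    (∫ ω : E n d, ρ i ω) = 1

/-- The multiscale mollification `F^δ` of the drift `F`:
`F_i^δ(t,z) = ∫ F(t, z - δ_{i·} ⋄ ω)_i ρ_i(ω) dω`, block `j` being mollified at scale `δ_{ij}`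
(equivalently, the anisotropic convolution of `F_i(t,·)` with the rescaled mollifier). -/
def molF {n : ℕ} {d : Fin n → ℕ} (ρ : Fin n → E n d → ℝ) (δ : Fin n → Fin n → ℝ)
    (F : ℝ → E n d → E n d) (t : ℝ) (z : E n d) : E n d :=
  fun i => ∫ ω : E n d, ρ i ω • F t (fun j => z j - δ i j • ω j) i

/-- The standing assumptions of the degenerate chain setup: dimensions, sub-criticality,
lower-triangular block structure of `A`, upper-diagonal dependence, boundedness and
anisotropic Hölder continuity of `F` (indices are 0-based: block `i` here is block `i+1`
of the paper). -/
structure ChainHyp (n : ℕ) [NeZero n] (d : Fin n → ℕ) (α T K : ℝ)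
    (A : ℝ → E n d →L[ℝ] E n d) (F : ℝ → E n d → E n d) (β : Fin n → ℝ) : Prop where
  hd : ∀ i, 1 ≤ d i
  hdmono : ∀ i j : Fin n, i ≤ j → d j ≤ d i
  hα₁ : 1 < α
  hα₂ : α < 2
  hT : 0 < T
  hK : 1 ≤ K
  hAmeas : ∀ x : E n d, Measurable fun t => A t x
  hAbdd : ∃ CA : ℝ, ∀ t : ℝ, ‖A t‖ ≤ CA
  hAblock : ∀ (t : ℝ) (i j : Fin n) (v : Fin (d j) → ℝ),
    (j : ℕ) + 1 < (i : ℕ) → A t (Pi.single j v) i = 0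
  hFmeas : Measurable fun p : ℝ × E n d => F p.1 p.2
  hFdep : ∀ (i : Fin n) (t : ℝ) (x x' : E n d), (∀ j, i ≤ j → x j = x' j) → F t x i = F t x' i
  hF0 : ∀ (t : ℝ) (i : Fin n), ‖F t 0 i‖ ≤ K
  hβ0 : 0 < β 0 ∧ β 0 ≤ 1
  hβ : ∀ j : Fin n, 1 ≤ (j : ℕ) →
    (1 + α * (((j : ℕ) : ℝ) - 1)) / (1 + α * ((j : ℕ) : ℝ)) < β j ∧ β j ≤ 1
  hHolder : ∃ CH : ℝ, 0 < CH ∧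
    (∀ (j : Fin n) (t : ℝ) (x x' : E n d), (∀ k, k ≠ j → x k = x' k) →
      ‖F t x 0 - F t x' 0‖ ≤ CH * ‖x j - x' j‖ ^ (β 0)) ∧
    ∀ (i j : Fin n), 1 ≤ (i : ℕ) → i ≤ j → ∀ (t : ℝ) (x x' : E n d),
      (∀ k, k ≠ j → x k = x' k) →
      ‖F t x i - F t x' i‖ ≤ CH * ‖x j - x' j‖ ^ (β j)

/-! ### Integral Gronwall inequality and integrability along trajectories -/

lemma gronwall_integral {ψ : ℝ → ℝ} {a b c L : ℝ} (hab : a ≤ b) (hL : 0 ≤ L)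
    (hψ : ContinuousOn ψ (Icc a b))
    (h : ∀ v ∈ Icc a b, ψ v ≤ c + L * ∫ u in a..v, ψ u) :
    ψ b ≤ c * Real.exp (L * (b - a)) := by
  have hint : IntervalIntegrable ψ volume a b := hψ.intervalIntegrable_of_Icc hab
  have hcont : ContinuousOn (fun v => ∫ u in a..v, ψ u) (Icc a b) := by
    have := intervalIntegral.continuousOn_primitive_interval (μ := volume) (f := ψ)
      (a := a) (b := b) (by
        rw [uIcc_of_le hab]; exact hψ.integrableOn_Icc)
    rwa [uIcc_of_le hab] at this
  have hder : ∀ v ∈ Ioo a b, HasDerivAt (fun v => ∫ u in a..v, ψ u) (ψ v) v := by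
    intro v hv
    refine intervalIntegral.integral_hasDerivAt_right ?_ ?_ ?_
    · exact hint.mono_set (by
        rw [uIcc_of_le hab, uIcc_of_le hv.1.le]; exact Icc_subset_Icc le_rfl hv.2.le)
    · exact (hψ.mono Ioo_subset_Icc_self).stronglyMeasurableAtFilter isOpen_Ioo v hv
    · exact hψ.continuousAt (Icc_mem_nhds hv.1 hv.2)
  have hder2 : ∀ v ∈ Ioo a b, HasDerivAt
      (fun v => (c + L * ∫ u in a..v, ψ u) * Real.exp (-(L * (v - a))))
      (L * ψ v * Real.exp (-(L * (v - a))) +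
        (c + L * ∫ u in a..v, ψ u) * (Real.exp (-(L * (v - a))) * (-(L * 1)))) v := by
    intro v hv
    have h1 := ((hder v hv).const_mul L).const_add c
    have h2 : HasDerivAt (fun v => Real.exp (-(L * (v - a))))
        (Real.exp (-(L * (v - a))) * (-(L * 1))) v :=
      ((((hasDerivAt_id v).sub_const a).const_mul L).neg).exp
    exact h1.mul h2
  have hanti : AntitoneOn
      (fun v => (c + L * ∫ u in a..v, ψ u) * Real.exp (-(L * (v - a)))) (Icc a b) := by
    refine antitoneOn_of_deriv_nonpos (convex_Icc a b) ?_ ?_ ?_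
    · exact (continuousOn_const.add (continuousOn_const.mul hcont)).mul
        (by fun_prop)
    · intro v hv
      rw [interior_Icc] at hv
      exact (hder2 v hv).differentiableAt.differentiableWithinAt
    · intro v hv
      rw [interior_Icc] at hv
      rw [(hder2 v hv).deriv]
      have h3 := h v ⟨hv.1.le, hv.2.le⟩
      have h4 := mul_le_mul_of_nonneg_left h3 hL
      have h5 := Real.exp_pos (-(L * (v - a)))
      have : L * ψ v * Real.exp (-(L * (v - a))) +
        (c + L * ∫ u in a..v, ψ u) * (Real.exp (-(L * (v - a))) * (-(L * 1)))
        = (L * ψ v - L * (c + L * ∫ u in a..v, ψ u)) * Real.exp (-(L * (v - a))) := by ring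
      rw [this]
      exact mul_nonpos_of_nonpos_of_nonneg (by linarith) h5.le
  have h6 := hanti (left_mem_Icc.2 hab) (right_mem_Icc.2 hab) hab
  simp only [intervalIntegral.integral_same, sub_self, mul_zero, neg_zero, Real.exp_zero,
    add_zero, mul_one] at h6
  have h7 := h b (right_mem_Icc.2 hab)
  rw [Real.exp_neg, ← div_eq_mul_inv, div_le_iff₀ (Real.exp_pos _)] at h6
  exact h7.trans h6

/-- The equation `f u = z + ∫_a^u g` with affinely bounded velocity forces `g` to be integrable,
even though the integral is a priori zero by convention when `g` is not: at a time `u` where `g` is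
integrable on `[a, u]`, Gronwall's inequality bounds `f u`; at any other time `f u = z`. Hence `g`
is bounded on `[a, b]`. -/
lemma integrable_traj_fwd {V : Type*} [NormedAddCommGroup V] [NormedSpace ℝ V]
    [FiniteDimensional ℝ V]
    {f g : ℝ → V} {z : V} {a b L : ℝ} (hab : a ≤ b) (hL : 0 ≤ L)
    (hg : AEStronglyMeasurable g volume)
    (hgr : ∀ u ∈ Icc a b, ‖g u‖ ≤ L * (1 + ‖f u‖))
    (hf : ∀ u ∈ Icc a b, f u = z + ∫ v in a..u, g v) :
    IntervalIntegrable g volume a b := by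
  have hbd : ∀ u ∈ Icc a b, 1 + ‖f u‖ ≤ (1 + ‖z‖) * Real.exp (L * (b - a)) := by
    intro r hr
    have hone : (1 : ℝ) ≤ Real.exp (L * (b - a)) :=
      Real.one_le_exp (mul_nonneg hL (by linarith))
    have hz : 0 ≤ ‖z‖ := norm_nonneg z
    by_cases hi : IntervalIntegrable g volume a r
    · have hsub : Icc a r ⊆ Icc a b := Icc_subset_Icc le_rfl hr.2
      have hcf : ContinuousOn f (Icc a r) := by
        have h1 := intervalIntegral.continuousOn_primitive_interval (μ := volume) (f := g)
          (a := a) (b := r) (by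
            rw [uIcc_of_le hr.1]
            exact (intervalIntegrable_iff_integrableOn_Icc_of_le hr.1).1 hi)
        rw [uIcc_of_le hr.1] at h1
        exact (continuousOn_const.add h1).congr (fun u hu => hf u (hsub hu))
      have hψ : ContinuousOn (fun u => 1 + ‖f u‖) (Icc a r) := continuousOn_const.add hcf.norm
      have h2 := gronwall_integral (c := 1 + ‖z‖) hr.1 hL hψ (by
        intro v hv
        have hiv : IntervalIntegrable (fun u => 1 + ‖f u‖) volume a v :=
          (hψ.mono (Icc_subset_Icc le_rfl hv.2)).intervalIntegrable_of_Icc hv.1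
        have h3 : ‖∫ u in a..v, g u‖ ≤ ∫ u in a..v, L * (1 + ‖f u‖) := by
          refine intervalIntegral.norm_integral_le_of_norm_le hv.1 ?_ (hiv.const_mul L)
          refine Filter.Eventually.of_forall fun u hu => hgr u (hsub ⟨hu.1.le, hu.2.trans hv.2⟩)
        rw [intervalIntegral.integral_const_mul] at h3
        have h4 := norm_add_le z (∫ u in a..v, g u)
        rw [← hf v (hsub hv)] at h4
        linarith)
      refine h2.trans (mul_le_mul_of_nonneg_left (Real.exp_le_exp.2 ?_) (by linarith))
      exact mul_le_mul_of_nonneg_left (by linarith [hr.2]) hL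
    -- the integral of a non-integrable velocity is zero, so the trajectory sits at `z`
    · rw [hf r hr, intervalIntegral.integral_undef hi, add_zero]
      exact le_mul_of_one_le_right (by linarith) hone
  rw [intervalIntegrable_iff_integrableOn_Icc_of_le hab]
  refine Measure.integrableOn_of_bounded (M := L * ((1 + ‖z‖) * Real.exp (L * (b - a))))
    (by simp) hg ?_
  filter_upwards [ae_restrict_mem measurableSet_Icc] with u hu
  exact (hgr u hu).trans (mul_le_mul_of_nonneg_left (hbd u hu) hL)

/-- Time reversal of `integrable_traj_fwd`, for an equation with prescribed terminal value. -/
lemma integrable_traj_bwd {V : Type*} [NormedAddCommGroup V] [NormedSpace ℝ V]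
    [FiniteDimensional ℝ V]
    {f g : ℝ → V} {z : V} {a b L : ℝ} (hab : a ≤ b) (hL : 0 ≤ L)
    (hg : StronglyMeasurable g)
    (hgr : ∀ u ∈ Icc a b, ‖g u‖ ≤ L * (1 + ‖f u‖))
    (hf : ∀ u ∈ Icc a b, f u = z - ∫ v in u..b, g v) :
    IntervalIntegrable g volume a b := by
  have h := integrable_traj_fwd (f := fun u => f (-u)) (g := fun u => -g (-u)) (z := z)
    (a := -b) (b := -a) (L := L) (by linarith) hL
    ((hg.comp_measurable measurable_neg).neg.aestronglyMeasurable)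
    (by
      intro u hu
      rw [norm_neg]
      exact hgr (-u) ⟨by linarith [hu.2], by linarith [hu.1]⟩)
    (by
      intro u hu
      have := hf (-u) ⟨by linarith [hu.2], by linarith [hu.1]⟩
      simp only [this, intervalIntegral.integral_neg, intervalIntegral.integral_comp_neg, neg_neg]
      abel)
  have h2 := h.neg
  have h3 := (IntervalIntegrable.iff_comp_neg (f := g) (a := a) (b := b) (by simp))
  rw [h3]
  refine (h2.symm).congr ?_
  intro u _
  simp

/-! ### Anisotropic scaling -/

/-- The rescaling `𝕋_h⁻¹` as a continuous linear map. -/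
def TinvL {n : ℕ} {d : Fin n → ℕ} (α h : ℝ) : E n d →L[ℝ] E n d :=
  LinearMap.toContinuousLinearMap
    { toFun := Tinv α h
      map_add' := by intro x y; ext i k; simp [Tinv, mul_add]
      map_smul' := by intro c x; ext i k; simp [Tinv]; ring }

lemma TinvL_apply {n : ℕ} {d : Fin n → ℕ} (α h : ℝ) (x : E n d) :
    TinvL α h x = Tinv α h x := rfl

lemma det_TinvL {n : ℕ} {d : Fin n → ℕ} {α h : ℝ} (hh : 0 < h) :
    LinearMap.det (TinvL (n := n) (d := d) α h : E n d →ₗ[ℝ] E n d) = (detT n d α h)⁻¹ := by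
  classical
  let B := Pi.basis (fun i : Fin n => Pi.basisFun ℝ (Fin (d i)))
  have hm : LinearMap.toMatrix B B (TinvL (n := n) (d := d) α h : E n d →ₗ[ℝ] E n d)
      = Matrix.diagonal (fun k : (Σ i : Fin n, Fin (d i)) =>
          (h ^ ((1 : ℝ) / α + ((k.1 : ℕ) : ℝ)))⁻¹) := by
    ext ⟨i, k⟩ ⟨j, l⟩
    rw [LinearMap.toMatrix_apply]
    simp only [B, Pi.basis_apply, Pi.basis_repr, ContinuousLinearMap.coe_coe, TinvL_apply, Tinv,
      Pi.basisFun_apply, Pi.basisFun_repr, Pi.smul_apply, smul_eq_mul]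
    by_cases hij : i = j
    · subst hij
      by_cases hkl : k = l
      · subst hkl; simp
      · simp [hkl]
    · simp [hij]
  rw [← LinearMap.det_toMatrix B, hm, Matrix.det_diagonal, Fintype.prod_sigma]
  simp only [Finset.prod_const, Finset.card_univ, Fintype.card_fin, inv_pow, Finset.prod_inv_distrib]
  congr 1
  rw [detT, Real.rpow_sum_of_pos hh]
  refine Finset.prod_congr rfl fun i _ => ?_
  rw [mul_comm, Real.rpow_mul hh.le, Real.rpow_natCast]

lemma detT_pos {n : ℕ} {d : Fin n → ℕ} {α h : ℝ} (hh : 0 < h) : 0 < detT n d α h :=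
  Real.rpow_pos_of_pos hh _

/-- Change of variables `z = 𝕋_h⁻¹ (p - y)` for a continuous integrable profile. -/
lemma integral_scaled {n : ℕ} {d : Fin n → ℕ} {α h : ℝ} (hh : 0 < h) {Φ : E n d → ℝ}
    (hΦ : Integrable Φ) (hΦc : Continuous Φ) (p : E n d) :
    Integrable (fun y : E n d => (detT n d α h)⁻¹ * Φ (Tinv α h (p - y))) ∧
    ∫ y : E n d, (detT n d α h)⁻¹ * Φ (Tinv α h (p - y)) = ∫ z, Φ z := by
  have hD := detT_pos (n := n) (d := d) (α := α) hh
  have : Measure.IsNegInvariant (volume : Measure (E n d)) := Measure.pi.isNegInvariant _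
  have hdet : LinearMap.det (TinvL (n := n) (d := d) α h : E n d →ₗ[ℝ] E n d) ≠ 0 := by
    rw [det_TinvL hh]; positivity
  have hmap := Measure.map_linearMap_addHaar_eq_smul_addHaar (volume : Measure (E n d)) hdet
  rw [det_TinvL hh, inv_inv, abs_of_pos hD] at hmap
  have hmeas : AEMeasurable (TinvL (n := n) (d := d) α h : E n d →ₗ[ℝ] E n d)
      (volume : Measure (E n d)) :=
    (TinvL (n := n) (d := d) α h).continuous.measurable.aemeasurable
  have hI : Integrable (fun y : E n d => Φ (Tinv α h y)) := by
    have h1 : Integrable Φ (Measure.map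
        (TinvL (n := n) (d := d) α h : E n d →ₗ[ℝ] E n d) volume) := by
      rw [hmap]; exact hΦ.smul_measure (by simp)
    exact (integrable_map_measure hΦc.aestronglyMeasurable hmeas).1 h1
  refine ⟨((hI.comp_sub_left p).const_mul _), ?_⟩
  rw [integral_const_mul, integral_sub_left_eq_self (fun y => Φ (Tinv α h y)) volume p]
  have h2 := integral_map hmeas (f := Φ) (by exact hΦc.aestronglyMeasurable)
  rw [hmap, integral_smul_measure] at h2
  have h3 : ∫ y : E n d, Φ (Tinv α h y) = detT n d α h * ∫ z, Φ z := by
    rw [ENNReal.toReal_ofReal hD.le] at h2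
    exact h2.symm
  rw [h3]
  field_simp

/-! ### The drift in the intrinsic scale -/

/-- The Hölder exponent of `F_i` in its `j`-th argument: `β 0` throughout the first block,
`β j` in the degenerate ones. -/
def hexp {n : ℕ} [NeZero n] (β : Fin n → ℝ) (i j : Fin n) : ℝ := if i = 0 then β 0 else β j

lemma hexp_pos_le {n : ℕ} [NeZero n] {d : Fin n → ℕ} {α T K : ℝ}
    {A : ℝ → E n d →L[ℝ] E n d} {F : ℝ → E n d → E n d} {β : Fin n → ℝ}
    (hc : ChainHyp n d α T K A F β) {i j : Fin n} (hij : i ≤ j) :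
    0 < hexp β i j ∧ hexp β i j ≤ 1 := by
  unfold hexp
  split_ifs with h
  · exact hc.hβ0
  · have hi : 1 ≤ (i : ℕ) := Nat.one_le_iff_ne_zero.2 (fun h' => h (Fin.ext (by simpa using h')))
    have hj : 1 ≤ (j : ℕ) := hi.trans hij
    have hb := hc.hβ j hj
    refine ⟨lt_of_le_of_lt ?_ hb.1, hb.2⟩
    have hj' : (1 : ℝ) ≤ ((j : ℕ) : ℝ) := by exact_mod_cast hj
    have hα := hc.hα₁
    have : 0 ≤ α * (((j : ℕ) : ℝ) - 1) := mul_nonneg (by linarith) (by linarith)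
    positivity

/-- The exponent inequality behind the choice of the Hölder thresholds: at the intrinsic scale
of block `j`, the increment of `F_i` is at most the scale of block `i` divided by time. -/
lemma hexp_scale {n : ℕ} [NeZero n] {d : Fin n → ℕ} {α T K : ℝ}
    {A : ℝ → E n d →L[ℝ] E n d} {F : ℝ → E n d → E n d} {β : Fin n → ℝ}
    (hc : ChainHyp n d α T K A F β) {i j : Fin n} (hij : i ≤ j) :
    1 / α + ((i : ℕ) : ℝ) - 1 ≤ (1 / α + ((j : ℕ) : ℝ)) * hexp β i j := by
  have hα := hc.hα₁
  have hα0 : 0 < α := by linarith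
  have hinv : 0 < 1 / α := by positivity
  have hinv1 : 1 / α ≤ 1 := by rw [div_le_one hα0]; exact hα.le
  by_cases h : i = 0
  · have := (hexp_pos_le hc hij).1
    have h0 : ((i : ℕ) : ℝ) = 0 := by simp [h]
    have h1 : (0 : ℝ) ≤ (1 / α + ((j : ℕ) : ℝ)) * hexp β i j := by positivity
    linarith
  · have hi : 1 ≤ (i : ℕ) := Nat.one_le_iff_ne_zero.2 (fun h' => h (Fin.ext (by simpa using h')))
    have hj : 1 ≤ (j : ℕ) := hi.trans hij
    have hb := (hc.hβ j hj).1
    have he : hexp β i j = β j := by simp [hexp, h]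
    have hij' : ((i : ℕ) : ℝ) ≤ ((j : ℕ) : ℝ) := by exact_mod_cast hij
    have hpos : (0 : ℝ) < 1 + α * ((j : ℕ) : ℝ) := by positivity
    rw [div_lt_iff₀ hpos] at hb
    rw [he]
    have : (1 / α + ((j : ℕ) : ℝ)) * β j = (β j * (1 + α * ((j : ℕ) : ℝ))) / α := by
      field_simp
    rw [this]
    have h2 : (1 + α * (((j : ℕ) : ℝ) - 1)) / α ≤ (β j * (1 + α * ((j : ℕ) : ℝ))) / α :=
      div_le_div_of_nonneg_right hb.le hα0.le
    have h3 : (1 + α * (((j : ℕ) : ℝ) - 1)) / α = 1 / α + ((j : ℕ) : ℝ) - 1 := by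
      field_simp
      ring
    linarith

/-- Increments of `F_i` between arbitrary points, obtained by changing one block at a time. -/
lemma F_diff {n : ℕ} [NeZero n] {d : Fin n → ℕ} {α T K : ℝ}
    {A : ℝ → E n d →L[ℝ] E n d} {F : ℝ → E n d → E n d} {β : Fin n → ℝ}
    (hc : ChainHyp n d α T K A F β) :
    ∃ CH : ℝ, 0 < CH ∧ ∀ (i : Fin n) (t : ℝ) (x x' : E n d),
      ‖F t x i - F t x' i‖ ≤
        ∑ j : Fin n, if i ≤ j then CH * ‖x j - x' j‖ ^ (hexp β i j) else 0 := by
  classical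
  obtain ⟨CH, hCH, h0, h1⟩ := hc.hHolder
  refine ⟨CH, hCH, fun i t x x' => ?_⟩
  have hone : ∀ (j : Fin n) (y y' : E n d), (∀ k, k ≠ j → y k = y' k) →
      ‖F t y i - F t y' i‖ ≤ if i ≤ j then CH * ‖y j - y' j‖ ^ (hexp β i j) else 0 := by
    intro j y y' hy
    split_ifs with hij
    · by_cases h : i = 0
      · subst h
        simpa [hexp] using h0 j t y y' hy
      · have hi : 1 ≤ (i : ℕ) :=
          Nat.one_le_iff_ne_zero.2 (fun h' => h (Fin.ext (by simpa using h')))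
        simpa [hexp, h] using h1 i j hi hij t y y' hy
    · rw [hc.hFdep i t y y' (fun k hk => hy k (fun hkj => hij (hkj ▸ hk)))]
      simp
  have key : ∀ S : Finset (Fin n), ‖F t (S.piecewise x x') i - F t x' i‖ ≤
      ∑ j ∈ S, if i ≤ j then CH * ‖x j - x' j‖ ^ (hexp β i j) else 0 := by
    intro S
    induction S using Finset.induction_on with
    | empty => simp
    | insert a S ha ih =>
      rw [Finset.sum_insert ha]
      have h2 := hone a ((insert a S).piecewise x x') (S.piecewise x x') (by
        intro k hk
        simp [Finset.piecewise, hk])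
      have e1 : ((insert a S).piecewise x x') a = x a := by simp
      have e2 : (S.piecewise x x') a = x' a := by simp [ha]
      rw [e1, e2] at h2
      calc _ = ‖(F t ((insert a S).piecewise x x') i - F t (S.piecewise x x') i)
              + (F t (S.piecewise x x') i - F t x' i)‖ := by congr 1; abel
        _ ≤ _ := (norm_add_le _ _).trans (add_le_add h2 ih)
  simpa using key Finset.univ

/-- The block structure of `A`: the `i`-th output block only sees the blocks `j ≥ i - 1`. -/
lemma A_diff {n : ℕ} [NeZero n] {d : Fin n → ℕ} {α T K : ℝ}
    {A : ℝ → E n d →L[ℝ] E n d} {F : ℝ → E n d → E n d} {β : Fin n → ℝ}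
    (hc : ChainHyp n d α T K A F β) :
    ∃ CA : ℝ, 0 < CA ∧ ∀ (i : Fin n) (t : ℝ) (x : E n d),
      ‖A t x i‖ ≤ ∑ j : Fin n, if (i : ℕ) ≤ (j : ℕ) + 1 then CA * ‖x j‖ else 0 := by
  classical
  obtain ⟨CA, hCA⟩ := hc.hAbdd
  refine ⟨|CA| + 1, by positivity, fun i t x => ?_⟩
  have hx : x = ∑ j : Fin n, Pi.single j (x j) := (Finset.univ_sum_single x).symm
  have : A t x i = ∑ j : Fin n, A t (Pi.single j (x j)) i := by
    conv_lhs => rw [hx]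
    rw [map_sum, Finset.sum_apply]
  rw [this]
  refine (norm_sum_le _ _).trans (Finset.sum_le_sum fun j _ => ?_)
  split_ifs with hij
  · calc ‖A t (Pi.single j (x j)) i‖ ≤ ‖A t (Pi.single j (x j))‖ := norm_le_pi_norm _ i
      _ ≤ ‖A t‖ * ‖(Pi.single j (x j) : E n d)‖ := (A t).le_opNorm _
      _ ≤ (|CA| + 1) * ‖x j‖ := by
        rw [Pi.norm_single]
        exact mul_le_mul_of_nonneg_right
          ((hCA t).trans (by linarith [le_abs_self CA])) (norm_nonneg _)
  · rw [hc.hAblock t i j _ (by omega)]; simp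

lemma rpow_compare {h S p q m : ℝ} (hh : 0 < h) (hS : h ≤ S) (hS1 : 1 ≤ S) (hq : q ≤ p)
    (hm : p - q ≤ m) : h ^ p ≤ S ^ m * h ^ q := by
  have : h ^ p = h ^ (p - q) * h ^ q := by rw [← Real.rpow_add hh]; congr 1; ring
  rw [this]
  refine mul_le_mul_of_nonneg_right ?_ (Real.rpow_nonneg hh.le _)
  exact (Real.rpow_le_rpow hh.le hS (by linarith)).trans
    (Real.rpow_le_rpow_of_exponent_le hS1 hm)

/-- In the intrinsic scale at time `h`, increments of the full drift are affinely bounded with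
rate `1/h`; over a time interval of length `h` this makes the Gronwall factor independent
of `h`. -/
lemma drift_scaled {n : ℕ} [NeZero n] {d : Fin n → ℕ} {α T K : ℝ}
    {A : ℝ → E n d →L[ℝ] E n d} {F : ℝ → E n d → E n d} {β : Fin n → ℝ}
    (hc : ChainHyp n d α T K A F β) {S : ℝ} (hS1 : 1 ≤ S) :
    ∃ C : ℝ, 0 < C ∧ ∀ h : ℝ, 0 < h → h ≤ S → ∀ (t : ℝ) (x x' : E n d),
      ‖Tinv α h ((A t x + F t x) - (A t x' + F t x'))‖ ≤
        C / h * (1 + ‖Tinv α h (x - x')‖) := by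
  obtain ⟨CH, hCH, hF⟩ := F_diff hc
  obtain ⟨CA, hCA, hA⟩ := A_diff hc
  have hα := hc.hα₁
  have hα0 : 0 < α := by linarith
  have hinv : 0 < 1 / α := by positivity
  have hinv1 : 1 / α ≤ 1 := by rw [div_le_one hα0]; exact hα.le
  set D : ℝ := S ^ ((n : ℝ) + 2) with hD
  have hD0 : 0 < D := Real.rpow_pos_of_pos (by linarith) _
  have hn0 : (0 : ℝ) < n := by exact_mod_cast Nat.pos_of_ne_zero (NeZero.ne n)
  refine ⟨n * (D * (CA + CH)), by positivity, fun h hh hhS t x x' => ?_⟩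
  set m : ℝ := ‖Tinv α h (x - x')‖ with hm
  have hm0 : 0 ≤ m := norm_nonneg _
  have hblock : ∀ j : Fin n, ‖x j - x' j‖ ≤ h ^ (1 / α + ((j : ℕ) : ℝ)) * m := by
    intro j
    have hp : 0 < h ^ (1 / α + ((j : ℕ) : ℝ)) := Real.rpow_pos_of_pos hh _
    have h1 : ‖Tinv α h (x - x') j‖ ≤ m := norm_le_pi_norm _ j
    simp only [Tinv, norm_smul, norm_inv, Real.norm_eq_abs, abs_of_pos hp, Pi.sub_apply] at h1
    rwa [inv_mul_le_iff₀ hp] at h1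
  rw [pi_norm_le_iff_of_nonneg (by positivity)]
  intro i
  have hp : 0 < h ^ (1 / α + ((i : ℕ) : ℝ)) := Real.rpow_pos_of_pos hh _
  simp only [Tinv, norm_smul, norm_inv, Real.norm_eq_abs, abs_of_pos hp]
  rw [inv_mul_le_iff₀ hp]
  set Q : ℝ := h ^ (1 / α + ((i : ℕ) : ℝ) - 1) with hQ
  have hQ0 : 0 < Q := Real.rpow_pos_of_pos hh _
  have hQe : h ^ (1 / α + ((i : ℕ) : ℝ)) = Q * h := by
    rw [hQ, Real.rpow_sub_one hh.ne']; field_simp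
  have hlt : ∀ j : Fin n, ((j : ℕ) : ℝ) + 1 ≤ n := fun j => by exact_mod_cast j.2
  have hi0 : (0 : ℝ) ≤ ((i : ℕ) : ℝ) := Nat.cast_nonneg _
  have hAi : ‖A t (x - x') i‖ ≤ n * (CA * (D * Q * (1 + m))) := by
    refine (hA i t (x - x')).trans ?_
    calc _ ≤ ∑ _j : Fin n, CA * (D * Q * (1 + m)) := by
          refine Finset.sum_le_sum fun j _ => ?_
          split_ifs with hij
          · refine mul_le_mul_of_nonneg_left ?_ hCA.le
            refine (hblock j).trans ?_
            refine mul_le_mul ?_ (by linarith) hm0 (by positivity)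
            have hij' : ((i : ℕ) : ℝ) ≤ ((j : ℕ) : ℝ) + 1 := by exact_mod_cast hij
            exact rpow_compare hh hhS hS1 (by linarith) (by linarith [hlt j])
          · positivity
      _ = _ := by simp
  have hFi : ‖F t x i - F t x' i‖ ≤ n * (CH * (D * Q * (1 + m))) := by
    refine (hF i t x x').trans ?_
    calc _ ≤ ∑ _j : Fin n, CH * (D * Q * (1 + m)) := by
          refine Finset.sum_le_sum fun j _ => ?_
          split_ifs with hij
          · refine mul_le_mul_of_nonneg_left ?_ hCH.le
            obtain ⟨hb0, hb1⟩ := hexp_pos_le hc hij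
            have hsc := hexp_scale hc hij
            set b := hexp β i j
            refine (Real.rpow_le_rpow (norm_nonneg _) (hblock j) hb0.le).trans ?_
            rw [Real.mul_rpow (Real.rpow_nonneg hh.le _) hm0, ← Real.rpow_mul hh.le]
            have hmb : m ^ b ≤ 1 + m := by
              rcases le_total m 1 with h1 | h1
              · exact (Real.rpow_le_one hm0 h1 hb0.le).trans (by linarith)
              · calc m ^ b ≤ m ^ (1 : ℝ) := Real.rpow_le_rpow_of_exponent_le h1 hb1
                  _ ≤ 1 + m := by rw [Real.rpow_one]; linarith
            refine mul_le_mul ?_ hmb (Real.rpow_nonneg hm0 _) (by positivity)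
            refine rpow_compare hh hhS hS1 hsc ?_
            have : (1 / α + ((j : ℕ) : ℝ)) * b ≤ 1 / α + ((j : ℕ) : ℝ) :=
              mul_le_of_le_one_right (by positivity) hb1
            linarith [hlt j]
          · positivity
      _ = _ := by simp
  have hsplit : ((A t x + F t x) - (A t x' + F t x')) i
      = A t (x - x') i + (F t x i - F t x' i) := by
    simp only [map_sub, Pi.sub_apply, Pi.add_apply]; abel
  rw [hsplit]
  refine (norm_add_le _ _).trans ((add_le_add hAi hFi).trans (le_of_eq ?_))
  rw [hQe]
  field_simp

/-- At scale `h = 1`, where `𝕋_1` is the identity, `drift_scaled` is linear growth of the drift. -/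
lemma drift_growth {n : ℕ} [NeZero n] {d : Fin n → ℕ} {α T K : ℝ}
    {A : ℝ → E n d →L[ℝ] E n d} {F : ℝ → E n d → E n d} {β : Fin n → ℝ}
    (hc : ChainHyp n d α T K A F β) :
    ∃ L : ℝ, 0 < L ∧ ∀ (t : ℝ) (x : E n d), ‖A t x + F t x‖ ≤ L * (1 + ‖x‖) := by
  obtain ⟨C, hC, h⟩ := drift_scaled hc (S := 1) le_rfl
  have hK := hc.hK
  refine ⟨C + K, by linarith, fun t x => ?_⟩
  have h1 := h 1 one_pos le_rfl t x 0
  have hT1 : ∀ y : E n d, Tinv α 1 y = y := by intro y; ext i k; simp [Tinv]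
  rw [hT1, hT1, map_zero, zero_add, sub_zero, div_one] at h1
  have h2 : ‖F t 0‖ ≤ K := (pi_norm_le_iff_of_nonneg (by linarith)).2 (hc.hF0 t)
  have h3 := norm_add_le (A t x + F t x - F t 0) (F t 0)
  rw [sub_add_cancel] at h3
  nlinarith [norm_nonneg x]

/-! ### Comparison of the forward and backward flows -/

lemma drift_measurable {n : ℕ} [NeZero n] {d : Fin n → ℕ} {α T K : ℝ}
    {A : ℝ → E n d →L[ℝ] E n d} {F : ℝ → E n d → E n d} {β : Fin n → ℝ}
    (hc : ChainHyp n d α T K A F β)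
    {θ : ℝ → ℝ → E n d → E n d} (hθ : IsFlow T A F θ) (s : ℝ) (z : E n d) :
    StronglyMeasurable (fun u => A u (θ u s z) + F u (θ u s z)) := by
  have hm : Measurable (fun u => θ u s z) :=
    hθ.1.comp (measurable_id.prodMk (measurable_const (a := (s, z))))
  have hA : Measurable (Function.uncurry (fun (x : E n d) (u : ℝ) => A u x)) :=
    measurable_uncurry_of_continuous_of_measurable (fun u => (A u).continuous)
      (fun x => hc.hAmeas x)
  exact ((hA.comp (hm.prodMk measurable_id)).add
    (hc.hFmeas.comp (measurable_id.prodMk hm))).stronglyMeasurable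

/-- The approximate Lipschitz property of the flow at the intrinsic scale: `θ_{t,s}` and
`θ_{s,t}` are inverse to each other up to a constant, although no flow property is available. -/
lemma flow_compare {n : ℕ} [NeZero n] {d : Fin n → ℕ} {α T K : ℝ}
    {A : ℝ → E n d →L[ℝ] E n d} {F : ℝ → E n d → E n d} {β : Fin n → ℝ}
    (hc : ChainHyp n d α T K A F β)
    {θ : ℝ → ℝ → E n d → E n d} (hθ : IsFlow T A F θ) :
    ∃ C : ℝ, 0 < C ∧ ∀ t s : ℝ, 0 ≤ t → t < s → s ≤ T → ∀ x y : E n d,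
      1 + ‖Tinv α (s - t) (θ s t x - y)‖ ≤ C * (1 + ‖Tinv α (s - t) (x - θ t s y)‖) := by
  obtain ⟨C, hC, hsc⟩ := drift_scaled hc (S := 1 + T) (by linarith [hc.hT])
  obtain ⟨L, hL, hgr⟩ := drift_growth hc
  refine ⟨Real.exp C, Real.exp_pos C, fun t s ht hts hsT x y => ?_⟩
  have hh : 0 < s - t := sub_pos.2 hts
  have htI : t ∈ Icc (0 : ℝ) T := ⟨ht, hts.le.trans hsT⟩
  have hsI : s ∈ Icc (0 : ℝ) T := ⟨ht.trans hts.le, hsT⟩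
  have hI : ∀ u ∈ Icc t s, u ∈ Icc (0 : ℝ) T := fun u hu => ⟨ht.trans hu.1, hu.2.trans hsT⟩
  set gX : ℝ → E n d := fun u => A u (θ u t x) + F u (θ u t x) with hgX
  set gY : ℝ → E n d := fun u => A u (θ u s y) + F u (θ u s y) with hgY
  have hX : ∀ u ∈ Icc t s, θ u t x = x + ∫ v in t..u, gX v := by
    intro u hu
    rw [hθ.2 u t (hI u hu) htI x, intervalIntegral.integral_symm, sub_neg_eq_add]
  have hY : ∀ u ∈ Icc t s, θ u s y = y - ∫ v in u..s, gY v :=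
    fun u hu => hθ.2 u s (hI u hu) hsI y
  have hXi : IntervalIntegrable gX volume t s :=
    integrable_traj_fwd hts.le hL.le (drift_measurable hc hθ t x).aestronglyMeasurable
      (fun u _ => hgr u _) hX
  have hYi : IntervalIntegrable gY volume t s :=
    integrable_traj_bwd hts.le hL.le (drift_measurable hc hθ s y) (fun u _ => hgr u _) hY
  have hsub : ∀ u ∈ Icc t s, uIcc t u ⊆ uIcc t s := fun u hu => by
    rw [uIcc_of_le hts.le, uIcc_of_le hu.1]; exact Icc_subset_Icc le_rfl hu.2
  have hsub' : ∀ u ∈ Icc t s, uIcc u s ⊆ uIcc t s := fun u hu => by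
    rw [uIcc_of_le hts.le, uIcc_of_le hu.2]; exact Icc_subset_Icc hu.1 le_rfl
  set g : ℝ → E n d := fun u => gX u - gY u with hg
  have hgi : IntervalIntegrable g volume t s := hXi.sub hYi
  have hdiff : ∀ u ∈ Icc t s,
      θ u t x - θ u s y = (x - θ t s y) + ∫ v in t..u, g v := by
    intro u hu
    have h1 := intervalIntegral.integral_add_adjacent_intervals
      (hYi.mono_set (hsub u hu)) (hYi.mono_set (hsub' u hu))
    rw [hX u hu, hY u hu, hY t (left_mem_Icc.2 hts.le), ← h1, hg,
      intervalIntegral.integral_sub (hXi.mono_set (hsub u hu)) (hYi.mono_set (hsub u hu))]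
    abel
  have hcont : ContinuousOn (fun u => θ u t x - θ u s y) (Icc t s) := by
    have h1 := intervalIntegral.continuousOn_primitive_interval (μ := volume) (f := g)
      (a := t) (b := s) (by
        rw [uIcc_of_le hts.le]
        exact (intervalIntegrable_iff_integrableOn_Icc_of_le hts.le).1 hgi)
    rw [uIcc_of_le hts.le] at h1
    exact (continuousOn_const.add h1).congr hdiff
  have hψ : ContinuousOn (fun u => 1 + ‖Tinv α (s - t) (θ u t x - θ u s y)‖) (Icc t s) :=
    continuousOn_const.add
      (((TinvL (n := n) (d := d) α (s - t)).continuous.comp_continuousOn hcont).norm)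
  have hG := gronwall_integral (c := 1 + ‖Tinv α (s - t) (x - θ t s y)‖) (L := C / (s - t))
    hts.le (by positivity) hψ (by
      intro v hv
      have hiv : IntervalIntegrable
          (fun u => 1 + ‖Tinv α (s - t) (θ u t x - θ u s y)‖) volume t v :=
        (hψ.mono (Icc_subset_Icc le_rfl hv.2)).intervalIntegrable_of_Icc hv.1
      have h1 : Tinv α (s - t) (θ v t x - θ v s y)
          = Tinv α (s - t) (x - θ t s y) + ∫ u in t..v, Tinv α (s - t) (g u) := by
        rw [hdiff v hv]
        have h2 := (TinvL (n := n) (d := d) α (s - t)).intervalIntegral_comp_comm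
          (hgi.mono_set (hsub v hv))
        simp only [TinvL_apply] at h2
        rw [h2]
        exact (TinvL (n := n) (d := d) α (s - t)).map_add _ _
      have h3 : ‖∫ u in t..v, Tinv α (s - t) (g u)‖ ≤
          ∫ u in t..v, C / (s - t) * (1 + ‖Tinv α (s - t) (θ u t x - θ u s y)‖) := by
        refine intervalIntegral.norm_integral_le_of_norm_le hv.1 ?_ (hiv.const_mul _)
        exact Filter.Eventually.of_forall fun u _ =>
          hsc (s - t) hh (by linarith) u (θ u t x) (θ u s y)
      rw [intervalIntegral.integral_const_mul] at h3
      have h4 := norm_add_le (Tinv α (s - t) (x - θ t s y))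
        (∫ u in t..v, Tinv α (s - t) (g u))
      rw [← h1] at h4
      linarith)
  have hss : θ s s y = y := by
    rw [hY s (right_mem_Icc.2 hts.le)]; simp
  rw [hss, div_mul_cancel₀ _ hh.ne'] at hG
  rw [mul_comm]
  exact hG

/-- control associated with the change of variable, Eq. (A.ctr-smoothing2).
Let `θ` be a flow for `(A,F)`.  For every `M > N + 1` there is `C = C(M,T) > 0` such that for
all `0 ≤ t < s ≤ T` and all `x, w`:
`∫ (det 𝕋_{s−t})⁻¹ (1 + |𝕋_{s−t}⁻¹(x − θ_{t,s}(y)) − w|)^{−M} dy ≤ C`. -/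
theorem stmt15 {n : ℕ} [NeZero n] {d : Fin n → ℕ} {α T K : ℝ}
    {A : ℝ → E n d →L[ℝ] E n d} {F : ℝ → E n d → E n d} {β : Fin n → ℝ}
    (hc : ChainHyp n d α T K A F β)
    (θ : ℝ → ℝ → E n d → E n d) (hθ : IsFlow T A F θ) :
    ∀ M : ℝ, ((∑ i : Fin n, d i : ℕ) : ℝ) + 1 < M →
      ∃ C : ℝ, 0 < C ∧ ∀ t s : ℝ, 0 ≤ t → t < s → s ≤ T → ∀ x w : E n d,
        (∫ y : E n d,
            (detT n d α (s - t))⁻¹ * (1 + ‖Tinv α (s - t) (x - θ t s y) - w‖) ^ (-M)) ≤ C := by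
  intro M hM
  obtain ⟨C, hC, hcmp⟩ := flow_compare hc hθ
  have hMpos : 0 ≤ M := le_trans (by positivity) hM.le
  have hInt : Integrable (fun z : E n d => (1 + ‖z‖) ^ (-M)) := by
    apply integrable_one_add_norm
    have : Module.finrank ℝ (E n d) = ∑ i : Fin n, d i := by
      rw [Module.finrank_pi_fintype]; simp
    rw [this]
    linarith
  have hCont : Continuous (fun z : E n d => (1 + ‖z‖) ^ (-M)) := by
    refine Continuous.rpow_const (by fun_prop) fun z => Or.inl ?_
    positivity
  have hI0 : 0 ≤ ∫ z : E n d, (1 + ‖z‖) ^ (-M) :=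
    integral_nonneg fun z => by positivity
  refine ⟨C ^ M * (∫ z : E n d, (1 + ‖z‖) ^ (-M)) + 1, by positivity, ?_⟩
  intro t s ht hts hsT x w
  have hh : 0 < s - t := sub_pos.2 hts
  have hD := detT_pos (n := n) (d := d) (α := α) hh
  -- absorb `w` into the starting point: `x' = x - 𝕋 w`
  obtain ⟨x', hx'⟩ : ∃ x' : E n d, ∀ y, Tinv α (s - t) (x' - y) = Tinv α (s - t) (x - y) - w := by
    refine ⟨fun i => x i - ((s - t) ^ ((1 : ℝ) / α + ((i : ℕ) : ℝ))) • w i, fun y => ?_⟩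
    ext i k
    have hp : (s - t) ^ ((1 : ℝ) / α + ((i : ℕ) : ℝ)) ≠ 0 := (Real.rpow_pos_of_pos hh _).ne'
    simp only [Tinv, Pi.sub_apply, Pi.smul_apply, smul_eq_mul]
    field_simp
    ring
  obtain ⟨hJi, hJ⟩ := integral_scaled (α := α) hh hInt hCont (θ s t x')
  calc _ ≤ ∫ y : E n d, C ^ M * ((detT n d α (s - t))⁻¹ *
        (1 + ‖Tinv α (s - t) (θ s t x' - y)‖) ^ (-M)) := by
        refine integral_mono_of_nonneg (Filter.Eventually.of_forall fun y => ?_)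
          (hJi.const_mul _) (Filter.Eventually.of_forall fun y => ?_)
        · simp only [Pi.zero_apply]; positivity
        · simp only
          rw [mul_left_comm, ← hx']
          refine mul_le_mul_of_nonneg_left ?_ (by positivity)
          have h1 := hcmp t s ht hts hsT x' y
          set a := 1 + ‖Tinv α (s - t) (θ s t x' - y)‖ with ha
          set b := 1 + ‖Tinv α (s - t) (x' - θ t s y)‖ with hb
          have ha0 : 0 < a := by positivity
          have hb0 : 0 < b := by positivity
          have h2 : (C * b) ^ (-M) ≤ a ^ (-M) :=
            Real.rpow_le_rpow_of_nonpos ha0 h1 (by linarith)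
          rw [Real.mul_rpow hC.le hb0.le, Real.rpow_neg hC.le] at h2
          rwa [inv_mul_le_iff₀ (Real.rpow_pos_of_pos hC _)] at h2
    _ = C ^ M * ∫ z : E n d, (1 + ‖z‖) ^ (-M) := by rw [integral_const_mul, hJ]
    _ ≤ _ := by linarith

end
end

section
/- Let (Ω,ℱ,P) be a probability space and 𝒵 a real-valued process with continuous paths and 𝒵_0 = 0 such that E[sup_{s∈[0,1]} |𝒵_s|] < ∞ and 𝒵 is γ-self-similar in law for some γ > 0 (for every ρ > 0 the processes (𝒵_{ρt})_{t≥0} and (ρ^γ 𝒵_t)_{t≥0} have the same law as random elements of C([0,∞),ℝ)). Then for every κ ∈ (0,γ), almost surely t^{−κ} 𝒵_t → 0 as t → 0⁺. -/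
/-!
The proof is a Borel–Cantelli argument along the dyadic scales `2⁻ⁿ`. Write `M z` for the supremum
of `|z|` on `[0,1]`, taken over a countable dense set so that it is measurable for the product
σ-algebra on `ℝ → ℝ`. Self-similarity gives `E[M (Z (2⁻ⁿ ·))] = 2^{-nγ} E[M Z]`
(`lintegral_pathSup_scale`), so `∑ₙ 2^{nκ} E[M (Z (2⁻ⁿ ·))]` is a convergent geometric series
when `κ < γ`. Hence almost surely `2^{nκ} M (Z (2⁻ⁿ ·)) → 0`. For `2^{-(n+1)} < t ≤ 2⁻ⁿ` one has
`t^{-κ} |Z t| ≤ 2^κ · 2^{nκ} M (Z (2⁻ⁿ ·))`, which passes from dyadic scales to all small `t`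
(`tendsto_of_dyadic`).
-/

open MeasureTheory Real Set Filter

noncomputable section

/-- The supremum of `|z|` over a countable dense subset of `[0,1]`, as an extended nonnegative real.
For continuous `z` this is the supremum over `[0,1]`; restricting to a countable set makes it
measurable for the product σ-algebra. -/
def pathSup (z : ℝ → ℝ) : ENNReal :=
  ⨆ n : ℕ, ENNReal.ofReal |z (TopologicalSpace.denseSeq (Icc (0 : ℝ) 1) n : ℝ)|

lemma measurable_pathSup : Measurable pathSup := by
  unfold pathSup
  refine Measurable.iSup fun n => ?_
  have h := measurable_pi_apply (X := fun _ : ℝ => ℝ)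
    (TopologicalSpace.denseSeq (Icc (0 : ℝ) 1) n : ℝ)
  exact ENNReal.measurable_ofReal.comp (measurable_norm.comp h)

lemma le_pathSup {z : ℝ → ℝ} (hz : Continuous z) {s : ℝ} (hs : s ∈ Icc (0 : ℝ) 1) :
    ENNReal.ofReal |z s| ≤ pathSup z := by
  refine (TopologicalSpace.denseRange_denseSeq (Icc (0 : ℝ) 1)).induction_on
    (p := fun s : Icc (0 : ℝ) 1 => ENNReal.ofReal |z s| ≤ pathSup z) ⟨s, hs⟩ ?_ ?_
  · exact isClosed_le (ENNReal.continuous_ofReal.comp (by fun_prop)) continuous_const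
  · intro n
    exact le_iSup (fun n : ℕ =>
      ENNReal.ofReal |z (TopologicalSpace.denseSeq (Icc (0 : ℝ) 1) n : ℝ)|) n

lemma pathSup_le_ofReal_iSup {z : ℝ → ℝ} (hz : Continuous z) :
    pathSup z ≤ ENNReal.ofReal (⨆ s : Icc (0 : ℝ) 1, |z (s : ℝ)|) := by
  refine iSup_le fun n => ENNReal.ofReal_le_ofReal ?_
  refine le_ciSup (f := fun s : Icc (0 : ℝ) 1 => |z (s : ℝ)|) ?_ _
  exact (isCompact_range (by fun_prop)).bddAbove

lemma pathSup_const_mul {c : ℝ} (hc : 0 ≤ c) (z : ℝ → ℝ) :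
    pathSup (fun t => c * z t) = ENNReal.ofReal c * pathSup z := by
  simp only [pathSup, ENNReal.mul_iSup, abs_mul, abs_of_nonneg hc, ENNReal.ofReal_mul hc]

lemma lintegral_pathSup_scale {Ω : Type} [MeasurableSpace Ω] (P : Measure Ω)
    (Z : Ω → ℝ → ℝ) (hZm : Measurable Z) (γ : ℝ) {r : ℝ} (hr : 0 < r)
    (hss : P.map (fun ω => fun t => Z ω (r * t)) = P.map (fun ω => fun t => r ^ γ * Z ω t)) :
    ∫⁻ ω, pathSup (fun t => Z ω (r * t)) ∂P
      = ENNReal.ofReal (r ^ γ) * ∫⁻ ω, pathSup (Z ω) ∂P := by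
  have hcoord : ∀ t, Measurable fun ω => Z ω t := fun t => (measurable_pi_apply t).comp hZm
  have h1 : Measurable (fun ω => fun t => Z ω (r * t)) :=
    measurable_pi_lambda _ fun t => hcoord (r * t)
  have h2 : Measurable (fun ω => fun t => r ^ γ * Z ω t) :=
    measurable_pi_lambda _ fun t => (hcoord t).const_mul _
  rw [← lintegral_map measurable_pathSup h1, hss, lintegral_map measurable_pathSup h2]
  simp only [pathSup_const_mul (Real.rpow_nonneg hr.le γ)]
  exact lintegral_const_mul _ (measurable_pathSup.comp hZm)

/-- Decay of the rescaled dyadic suprema forces decay along all small times, since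
`t^{-κ}` varies by at most the factor `2^κ` on a dyadic interval. -/
lemma tendsto_of_dyadic {z : ℝ → ℝ} (hz : Continuous z) {κ : ℝ} (hκ : 0 < κ)
    (h : Tendsto (fun n : ℕ => ENNReal.ofReal (((1 / 2 : ℝ) ^ n) ^ (-κ)) *
      pathSup (fun t => z ((1 / 2 : ℝ) ^ n * t))) atTop (nhds 0)) :
    Tendsto (fun t : ℝ => t ^ (-κ) * z t) (nhdsWithin 0 (Ioi 0)) (nhds 0) := by
  rw [Metric.tendsto_nhds]
  intro ε hε
  have h2 : (0 : ℝ) < (1 / 2 : ℝ) ^ (-κ) := Real.rpow_pos_of_pos (by norm_num) _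
  have hδ : (0 : ENNReal) < ENNReal.ofReal (ε / (1 / 2 : ℝ) ^ (-κ)) :=
    ENNReal.ofReal_pos.2 (div_pos hε h2)
  obtain ⟨N, hN⟩ := eventually_atTop.1 (h.eventually_lt_const hδ)
  filter_upwards [Ioo_mem_nhdsGT (show (0 : ℝ) < (1 / 2) ^ N by positivity)] with t ht
  obtain ⟨n, hn1, hn2⟩ := exists_nat_pow_near_of_lt_one ht.1
    (ht.2.le.trans (pow_le_one₀ (by norm_num) (by norm_num)))
    (show (0 : ℝ) < 1 / 2 by norm_num) (by norm_num)
  have hNn : N ≤ n := by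
    by_contra! hlt
    have := pow_le_pow_of_le_one (show (0 : ℝ) ≤ 1 / 2 by norm_num) (by norm_num)
      (show n + 1 ≤ N from hlt)
    linarith [ht.2]
  have ha : (0 : ℝ) < (1 / 2) ^ n := by positivity
  have hle : ENNReal.ofReal |z t| ≤ pathSup (fun t => z ((1 / 2 : ℝ) ^ n * t)) := by
    have := le_pathSup (z := fun t => z ((1 / 2 : ℝ) ^ n * t)) (by fun_prop)
      (s := t / (1 / 2) ^ n) ⟨div_nonneg ht.1.le ha.le, (div_le_one ha).2 hn2⟩
    simpa only [mul_div_cancel₀ t ha.ne'] using this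
  have hlt := (mul_le_mul_right hle
    (ENNReal.ofReal (((1 / 2 : ℝ) ^ n) ^ (-κ)))).trans_lt (hN n hNn)
  have hp : (0 : ℝ) < ((1 / 2 : ℝ) ^ n) ^ (-κ) := Real.rpow_pos_of_pos ha _
  rw [← ENNReal.ofReal_mul hp.le, ENNReal.ofReal_lt_ofReal_iff (div_pos hε h2),
    lt_div_iff₀ h2] at hlt
  have hpow : t ^ (-κ) ≤ ((1 / 2 : ℝ) ^ n) ^ (-κ) * (1 / 2 : ℝ) ^ (-κ) := by
    rw [← Real.mul_rpow ha.le (by norm_num), ← pow_succ]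
    exact Real.rpow_le_rpow_of_nonpos (by positivity) hn1.le (by linarith)
  rw [dist_zero_right, Real.norm_eq_abs, abs_mul, abs_of_pos (Real.rpow_pos_of_pos ht.1 _)]
  calc t ^ (-κ) * |z t| ≤ ((1 / 2 : ℝ) ^ n) ^ (-κ) * (1 / 2 : ℝ) ^ (-κ) * |z t| := by gcongr
    _ = ((1 / 2 : ℝ) ^ n) ^ (-κ) * |z t| * (1 / 2 : ℝ) ^ (-κ) := by ring
    _ < ε := hlt

/-- small-time decay of a self-similar process below its intrinsic scale.
Let `𝒵` be a process with continuous paths, `𝒵_0 = 0`, integrable supremum on `[0,1]`, which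
is `γ`-self-similar in law for some `γ > 0`.  Then for every `κ ∈ (0,γ)`, almost surely
`t^{−κ} 𝒵_t → 0` as `t → 0⁺`. -/
theorem stmt18 {Ω : Type} [MeasurableSpace Ω] (P : Measure Ω) [IsProbabilityMeasure P]
    (Z : Ω → ℝ → ℝ) (hZm : Measurable Z) (hZc : ∀ ω, Continuous (Z ω))
    (hZ0 : ∀ ω, Z ω 0 = 0)
    (hZint : Integrable (fun ω => ⨆ s : Icc (0 : ℝ) 1, |Z ω (s : ℝ)|) P)
    (γ : ℝ) (hγ : 0 < γ)
    (hss : ∀ r : ℝ, 0 < r →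
      P.map (fun ω => fun t => Z ω (r * t)) = P.map (fun ω => fun t => r ^ γ * Z ω t)) :
    ∀ κ : ℝ, 0 < κ → κ < γ →
      ∀ᵐ ω ∂P, Tendsto (fun t : ℝ => t ^ (-κ) * Z ω t)
        (nhdsWithin 0 (Ioi 0)) (nhds 0) := by
  intro κ hκ hκγ
  have hfin : ∫⁻ ω, pathSup (Z ω) ∂P ≠ ⊤ :=
    ((lintegral_mono fun ω => pathSup_le_ofReal_iSup (hZc ω)).trans_lt
      hZint.lintegral_lt_top).ne
  have hmeas : ∀ n : ℕ, Measurable fun ω => pathSup (fun t => Z ω ((1 / 2 : ℝ) ^ n * t)) :=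
    fun n => measurable_pathSup.comp
      (measurable_pi_lambda _ fun t => (measurable_pi_apply ((1 / 2 : ℝ) ^ n * t)).comp hZm)
  -- The weighted expectations form a geometric series of ratio `2^{κ-γ} < 1`.
  have hterm : ∀ n : ℕ, ∫⁻ ω, ENNReal.ofReal (((1 / 2 : ℝ) ^ n) ^ (-κ)) *
      pathSup (fun t => Z ω ((1 / 2 : ℝ) ^ n * t)) ∂P
      = ENNReal.ofReal ((1 / 2 : ℝ) ^ (γ - κ)) ^ n * ∫⁻ ω, pathSup (Z ω) ∂P := by
    intro n
    have ha : (0 : ℝ) < (1 / 2) ^ n := by positivity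
    rw [lintegral_const_mul _ (hmeas n), lintegral_pathSup_scale P Z hZm γ ha (hss _ ha),
      ← mul_assoc, ← ENNReal.ofReal_mul (by positivity), ← Real.rpow_add ha,
      ← ENNReal.ofReal_pow (by positivity), ← Real.rpow_natCast, ← Real.rpow_natCast,
      ← Real.rpow_mul (by norm_num), ← Real.rpow_mul (by norm_num)]
    ring_nf
  have hsum : ∫⁻ ω, ∑' n : ℕ, ENNReal.ofReal (((1 / 2 : ℝ) ^ n) ^ (-κ)) *
      pathSup (fun t => Z ω ((1 / 2 : ℝ) ^ n * t)) ∂P ≠ ⊤ := by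
    rw [lintegral_tsum fun n => ((hmeas n).const_mul _).aemeasurable]
    simp only [hterm]
    rw [ENNReal.tsum_mul_right, ENNReal.tsum_geometric]
    refine ENNReal.mul_ne_top (ENNReal.inv_ne_top.2 (tsub_pos_of_lt ?_).ne') hfin
    rw [ENNReal.ofReal_lt_one]
    exact Real.rpow_lt_one (by norm_num) (by norm_num) (by linarith)
  filter_upwards [ae_lt_top (Measurable.tsum fun n => (hmeas n).const_mul _) hsum]
    with ω hω
  exact tendsto_of_dyadic (hZc ω) hκ (ENNReal.tendsto_atTop_zero_of_tsum_ne_top hω.ne)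

end
end
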